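/- Let a ∈ ℝ and let u : (a,∞) → ℝ be twice continuously differentiable with u''(x) + u(x)² = 0 for all x > a, u(x) → 0 and u'(x) → 0 as x → ∞, and u not identically zero on (a,∞). Then there exists a constant x₀ with x₀ ≥ −a such that u(x) = −6/(x + x₀)² for all x > a. -/

import Mathlib

open Filter

/-! Along a decaying solution the energy `u'² / 2 + u³ / 3` is constant, hence zero. Since then
`|u'| = √(2|u|/3) |u|`, Grönwall's inequality shows that a solution with a single zero vanishes
identically. Otherwise `u` and, by the energy relation, `u'` have no zeros, the quotient
`-2 u / u'` has derivative `1`, and substituting `-2 u / u' = x + x₀` back into the energy relation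
gives `u = -6 / (x + x₀)²`. -/

section Energy

variable {𝕜 : Type*} [RCLike 𝕜] {u u' f F : 𝕜 → 𝕜}

/-- The total energy, kinetic plus potential, of the equation `u'' = -F'(u)` at the point
`(u, u') = (v, p)` of its phase space. -/
def energy (F : 𝕜 → 𝕜) (v p : 𝕜) : 𝕜 :=
  p ^ 2 / 2 + F v

/-- The energy of the equation `u'' + u² = 0`, whose potential is `v³ / 3`. -/
def cubicEnergy (v p : 𝕜) : 𝕜 :=
  energy (fun w ↦ w ^ 3 / 3) v p

theorem cubicEnergy_eq_zero_iff {v p : 𝕜} : cubicEnergy v p = 0 ↔ v ^ 3 = -(3 / 2) * p ^ 2 := by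
  unfold cubicEnergy energy
  constructor <;> intro h
  · linear_combination 3 * h
  · linear_combination h / 3

theorem hasDerivAt_energy {x : 𝕜} (hu : HasDerivAt u (u' x) x)
    (hu' : HasDerivAt u' (-f (u x)) x) (hF : HasDerivAt F (f (u x)) (u x)) :
    HasDerivAt (fun y ↦ energy F (u y) (u' y)) 0 x := by
  refine (((hu'.fun_pow 2).div_const 2).fun_add (hF.comp x hu)).congr_deriv ?_
  push_cast
  ring

theorem energy_eq_energy {s : Set 𝕜} (hs : IsOpen s) (hs' : IsPreconnected s)
    (hu : ∀ x ∈ s, HasDerivAt u (u' x) x) (hu' : ∀ x ∈ s, HasDerivAt u' (-f (u x)) x)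
    (hF : ∀ x ∈ s, HasDerivAt F (f (u x)) (u x)) {x y : 𝕜} (hx : x ∈ s) (hy : y ∈ s) :
    energy F (u x) (u' x) = energy F (u y) (u' y) := by
  have hE : ∀ z ∈ s, HasDerivAt (fun y ↦ energy F (u y) (u' y)) 0 z := fun z hz ↦
    hasDerivAt_energy (hu z hz) (hu' z hz) (hF z hz)
  exact hs.is_const_of_deriv_eq_zero hs'
    (fun z hz ↦ (hE z hz).differentiableAt.differentiableWithinAt) (fun z hz ↦ (hE z hz).deriv)
    hx hy

end Energy

theorem energy_eq_of_tendsto_atTop {a c q : ℝ} {u u' f F : ℝ → ℝ}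
    (hu : ∀ x ∈ Set.Ioi a, HasDerivAt u (u' x) x)
    (hu' : ∀ x ∈ Set.Ioi a, HasDerivAt u' (-f (u x)) x)
    (hF : ∀ x ∈ Set.Ioi a, HasDerivAt F (f (u x)) (u x)) (hFc : ContinuousAt F c)
    (hulim : Tendsto u atTop (nhds c)) (hu'lim : Tendsto u' atTop (nhds q))
    {x : ℝ} (hx : x ∈ Set.Ioi a) : energy F (u x) (u' x) = energy F c q := by
  have hlim : Tendsto (fun y ↦ energy F (u y) (u' y)) atTop (nhds (energy F c q)) :=
    ((hu'lim.pow 2).div_const 2).add (hFc.tendsto.comp hulim)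
  refine tendsto_nhds_unique (tendsto_const_nhds.congr' ?_) hlim
  filter_upwards [eventually_gt_atTop a] with y hy
  exact energy_eq_energy isOpen_Ioi isPreconnected_Ioi hu hu' hF hx hy

theorem cubicEnergy_eq_zero_of_tendsto_atTop {a : ℝ} {u u' : ℝ → ℝ}
    (hu : ∀ x ∈ Set.Ioi a, HasDerivAt u (u' x) x)
    (hu' : ∀ x ∈ Set.Ioi a, HasDerivAt u' (-u x ^ 2) x)
    (hulim : Tendsto u atTop (nhds 0)) (hu'lim : Tendsto u' atTop (nhds 0))
    {x : ℝ} (hx : x ∈ Set.Ioi a) : cubicEnergy (u x) (u' x) = 0 := by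
  have hpotential : ∀ v : ℝ, HasDerivAt (fun w ↦ w ^ 3 / 3) (v ^ 2) v := fun v ↦ by
    simpa using (hasDerivAt_pow 3 v).div_const 3
  have hlim := energy_eq_of_tendsto_atTop (f := fun v ↦ v ^ 2) hu hu'
    (fun y _ ↦ hpotential (u y)) (hpotential 0).continuousAt hulim hu'lim hx
  simpa [cubicEnergy, energy] using hlim

section Gronwall

variable {E : Type*} [NormedAddCommGroup E] [NormedSpace ℝ E] {f f' : ℝ → E} {K : ℝ → ℝ}

theorem eq_zero_of_norm_deriv_le_mul_norm_right {a b : ℝ} (hab : a ≤ b)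
    (hf : ∀ x ∈ Set.Icc a b, HasDerivAt f (f' x) x) (hK : ContinuousOn K (Set.Icc a b))
    (bound : ∀ x ∈ Set.Icc a b, ‖f' x‖ ≤ K x * ‖f x‖) (ha : f a = 0) : f b = 0 := by
  obtain ⟨C, hC⟩ := isCompact_Icc.exists_bound_of_continuousOn hK
  refine eq_zero_of_abs_deriv_le_mul_abs_self_of_eq_zero_right
    (fun x hx ↦ (hf x hx).continuousAt.continuousWithinAt)
    (fun x hx ↦ (hf x (Set.Ico_subset_Icc_self hx)).hasDerivWithinAt) ha (K := C)
    (fun x hx ↦ ?_) b (Set.right_mem_Icc.2 hab)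
  have hx' := Set.Ico_subset_Icc_self hx
  exact (bound x hx').trans (by gcongr; exact (Real.le_norm_self _).trans (hC x hx'))

theorem eq_zero_of_norm_deriv_le_mul_norm_left {a b : ℝ} (hab : a ≤ b)
    (hf : ∀ x ∈ Set.Icc a b, HasDerivAt f (f' x) x) (hK : ContinuousOn K (Set.Icc a b))
    (bound : ∀ x ∈ Set.Icc a b, ‖f' x‖ ≤ K x * ‖f x‖) (hb : f b = 0) : f a = 0 := by
  have hneg : Set.MapsTo Neg.neg (Set.Icc (-b) (-a)) (Set.Icc a b) := fun x hx ↦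
    ⟨le_neg.2 hx.2, neg_le.2 hx.1⟩
  have hzero := eq_zero_of_norm_deriv_le_mul_norm_right (f := fun x ↦ f (-x))
    (f' := fun x ↦ -f' (-x)) (K := fun x ↦ K (-x)) (neg_le_neg hab)
    (fun x hx ↦ by
      simpa [Function.comp_def] using (hf (-x) (hneg hx)).scomp x (hasDerivAt_neg x))
    (hK.comp continuousOn_neg hneg)
    (fun x hx ↦ by simpa using bound (-x) (hneg hx)) (by simpa using hb)
  simpa using hzero

theorem eqOn_zero_of_norm_deriv_le_mul_norm {s : Set ℝ} (hs : s.OrdConnected)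
    (hf : ∀ x ∈ s, HasDerivAt f (f' x) x) (hK : ContinuousOn K s)
    (bound : ∀ x ∈ s, ‖f' x‖ ≤ K x * ‖f x‖) {x₀ : ℝ} (hx₀ : x₀ ∈ s) (hzero : f x₀ = 0) :
    Set.EqOn f 0 s := by
  intro x hx
  rcases le_total x₀ x with h | h
  · have hsub := hs.out hx₀ hx
    exact eq_zero_of_norm_deriv_le_mul_norm_right h (fun y hy ↦ hf y (hsub hy)) (hK.mono hsub)
      (fun y hy ↦ bound y (hsub hy)) hzero
  · have hsub := hs.out hx hx₀
    exact eq_zero_of_norm_deriv_le_mul_norm_left h (fun y hy ↦ hf y (hsub hy)) (hK.mono hsub)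
      (fun y hy ↦ bound y (hsub hy)) hzero

end Gronwall

theorem abs_eq_sqrt_mul_abs_of_cubicEnergy_eq_zero {v p : ℝ} (h : cubicEnergy v p = 0) :
    |p| = √(2 / 3 * |v|) * |v| := by
  have hcube : v ^ 3 = -(3 / 2) * p ^ 2 := cubicEnergy_eq_zero_iff.1 h
  have hv : v ≤ 0 := by
    by_contra! hpos
    linarith [pow_pos hpos 3, sq_nonneg p]
  have hsq : p ^ 2 = 2 / 3 * |v| * v ^ 2 := by
    rw [abs_of_nonpos hv]
    linear_combination (2 / 3) * hcube
  rw [← Real.sqrt_sq_eq_abs p, hsq, Real.sqrt_mul (by positivity), Real.sqrt_sq_eq_abs]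

theorem eqOn_zero_of_cubicEnergy_eq_zero {s : Set ℝ} (hs : s.OrdConnected) {u u' : ℝ → ℝ}
    (hu : ∀ x ∈ s, HasDerivAt u (u' x) x) (hE : ∀ x ∈ s, cubicEnergy (u x) (u' x) = 0)
    {x₀ : ℝ} (hx₀ : x₀ ∈ s) (hzero : u x₀ = 0) : Set.EqOn u 0 s := by
  have hcont : ContinuousOn u s := fun x hx ↦ (hu x hx).continuousAt.continuousWithinAt
  exact eqOn_zero_of_norm_deriv_le_mul_norm (K := fun x ↦ √(2 / 3 * |u x|)) hs hu
    (by fun_prop) (fun x hx ↦ (abs_eq_sqrt_mul_abs_of_cubicEnergy_eq_zero (hE x hx)).le)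
    hx₀ hzero

section ZeroEnergy

variable {𝕜 : Type*} [RCLike 𝕜] {u u' : 𝕜 → 𝕜}

theorem ne_zero_of_cubicEnergy_eq_zero {v p : 𝕜} (h : cubicEnergy v p = 0) (hv : v ≠ 0) :
    p ≠ 0 := by
  rintro rfl
  simp [cubicEnergy_eq_zero_iff, hv] at h

theorem hasDerivAt_neg_two_mul_div_deriv {x : 𝕜} (hu : HasDerivAt u (u' x) x)
    (hu' : HasDerivAt u' (-u x ^ 2) x) (hE : cubicEnergy (u x) (u' x) = 0) (hne : u x ≠ 0) :
    HasDerivAt (fun y ↦ -2 * u y / u' y) 1 x := by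
  have hne' : u' x ≠ 0 := ne_zero_of_cubicEnergy_eq_zero hE hne
  refine ((hu.const_mul (-2)).fun_div hu' hne').congr_deriv ?_
  rw [div_eq_one_iff_eq (pow_ne_zero 2 hne')]
  linear_combination -2 * cubicEnergy_eq_zero_iff.1 hE

theorem exists_eq_neg_six_div_sq {s : Set 𝕜} (hs : IsOpen s) (hs' : IsPreconnected s)
    (hu : ∀ x ∈ s, HasDerivAt u (u' x) x) (hu' : ∀ x ∈ s, HasDerivAt u' (-u x ^ 2) x)
    (hE : ∀ x ∈ s, cubicEnergy (u x) (u' x) = 0) (hne : ∀ x ∈ s, u x ≠ 0) :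
    ∃ x₀ : 𝕜, ∀ x ∈ s, x + x₀ ≠ 0 ∧ u x = -6 / (x + x₀) ^ 2 := by
  have hderiv : ∀ x ∈ s, HasDerivAt (fun y ↦ -2 * u y / u' y - y) 0 x := fun x hx ↦ by
    simpa using (hasDerivAt_neg_two_mul_div_deriv (hu x hx) (hu' x hx) (hE x hx) (hne x hx)).fun_sub
      (hasDerivAt_id x)
  obtain ⟨x₀, hx₀⟩ := hs.exists_is_const_of_deriv_eq_zero hs'
    (fun x hx ↦ (hderiv x hx).differentiableAt.differentiableWithinAt)
    (fun x hx ↦ (hderiv x hx).deriv)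
  refine ⟨x₀, fun x hx ↦ ?_⟩
  have hux : u x ≠ 0 := hne x hx
  have hu'x : u' x ≠ 0 := ne_zero_of_cubicEnergy_eq_zero (hE x hx) hux
  have hquot : x + x₀ = -2 * u x / u' x := by rw [← hx₀ x hx]; ring
  rw [hquot]
  refine ⟨div_ne_zero (mul_ne_zero (by simp) hux) hu'x, ?_⟩
  field_simp
  linear_combination 4 * cubicEnergy_eq_zero_iff.1 (hE x hx)

end ZeroEnergy

/-- Classification of decaying solutions of the homogeneous equation `u'' + u² = 0` on
`(a,∞)`: every nontrivial solution decaying together with its derivative at infinity is of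
the form `u(x) = −6/(x + x₀)²` with `x₀ ≥ −a`. -/
theorem statement4 (a : ℝ) (u u' u'' : ℝ → ℝ)
    (hderiv1 : ∀ x ∈ Set.Ioi a, HasDerivAt u (u' x) x)
    (hderiv2 : ∀ x ∈ Set.Ioi a, HasDerivAt u' (u'' x) x)
    (hcont : ContinuousOn u'' (Set.Ioi a))
    (hode : ∀ x ∈ Set.Ioi a, u'' x + (u x) ^ 2 = 0)
    (hulim : Tendsto u atTop (nhds 0))
    (hu'lim : Tendsto u' atTop (nhds 0))
    (hne : ∃ x ∈ Set.Ioi a, u x ≠ 0) :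
    ∃ x₀ : ℝ, x₀ ≥ -a ∧ ∀ x ∈ Set.Ioi a, u x = -6 / (x + x₀) ^ 2 := by
  have hu' : ∀ x ∈ Set.Ioi a, HasDerivAt u' (-u x ^ 2) x := fun x hx ↦
    eq_neg_of_add_eq_zero_left (hode x hx) ▸ hderiv2 x hx
  have hE : ∀ x ∈ Set.Ioi a, cubicEnergy (u x) (u' x) = 0 := fun x hx ↦
    cubicEnergy_eq_zero_of_tendsto_atTop hderiv1 hu' hulim hu'lim hx
  have hne_zero : ∀ x ∈ Set.Ioi a, u x ≠ 0 := by
    obtain ⟨x₁, hx₁, hux₁⟩ := hne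
    exact fun x hx hzero ↦ hux₁
      (eqOn_zero_of_cubicEnergy_eq_zero Set.ordConnected_Ioi hderiv1 hE hx hzero hx₁)
  obtain ⟨x₀, hx₀⟩ := exists_eq_neg_six_div_sq isOpen_Ioi isPreconnected_Ioi hderiv1 hu' hE hne_zero
  refine ⟨x₀, ?_, fun x hx ↦ (hx₀ x hx).2⟩
  by_contra! hlt
  exact (hx₀ (-x₀) (lt_neg.2 hlt)).1 (neg_add_cancel x₀)
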